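/- Let d ≥ 1, ν ∈ (0,2), γ ≤ 0, N ≥ 1. The weighted fractional Fisher information I^N_{ν,γ} satisfies: (a) convexity: for all probability densities G, H on ℝ^{dN} and all t ∈ [0,1], I^N_{ν,γ}(tG + (1−t)H) ≤ t I^N_{ν,γ}(G) + (1−t) I^N_{ν,γ}(H); (b) lower semicontinuity: if (G_n) are probability densities on ℝ^{dN} such that the measures G_n dx converge weakly to G dx for a probability density G, then liminf_{n→∞} I^N_{ν,γ}(G_n) ≥ I^N_{ν,γ}(G); (c) tensorization: for every probability density f on ℝ^d, I^N_{ν,γ}(f^{⊗N}) = |⟨·⟩^{γ/2} √f|²_{H^{ν/2}(ℝ^d)}. -/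

import Mathlib

open MeasureTheory ENNReal

noncomputable section

/-- `ℝ^d` as a Euclidean space. -/
abbrev Euc (d : ℕ) := EuclideanSpace ℝ (Fin d)

/-- Japanese bracket `⟨x⟩ = √(1+|x|²)`. -/
def jap {d : ℕ} (x : Euc d) : ℝ := Real.sqrt (1 + ‖x‖^2)

/-- Fractional Sobolev seminorm squared `|f|²_{H^s(ℝ^d)}`, valued in `[0,∞]`. -/
def fracSobolevSq (d : ℕ) (s : ℝ) (f : Euc d → ℝ) : ℝ≥0∞ :=
  ∫⁻ x : Euc d, ∫⁻ y : Euc d, ENNReal.ofReal ((f x - f y)^2 / ‖x - y‖ ^ ((d : ℝ) + 2*s))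

/-- Weighted normalized fractional Fisher information `I^N_{ν,γ}`, valued in `[0,∞]`. -/
def fisherInfo (d N : ℕ) (ν γ : ℝ) (G : (Fin N → Euc d) → ℝ) : ℝ≥0∞ :=
  (N : ℝ≥0∞)⁻¹ * ∑ i : Fin N, ∫⁻ V : Fin N → Euc d, ∫⁻ w : Euc d,
    ENNReal.ofReal ((jap (V i) ^ (γ/2) * Real.sqrt (G V)
      - jap w ^ (γ/2) * Real.sqrt (G (Function.update V i w)))^2
      / ‖V i - w‖ ^ ((d : ℝ) + ν))

/-- A probability density: measurable, nonnegative, total mass one. -/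
def IsProbDensity {α : Type*} [MeasureSpace α] (f : α → ℝ) : Prop :=
  Measurable f ∧ (∀ x, 0 ≤ f x) ∧ ∫⁻ x, ENNReal.ofReal (f x) = 1

/-- A symmetric (exchangeable) probability density on `(ℝ^d)^N`. -/
def IsSymDensity (d N : ℕ) (F : (Fin N → Euc d) → ℝ) : Prop :=
  IsProbDensity F ∧ ∀ (σ : Equiv.Perm (Fin N)) (V : Fin N → Euc d), F (V ∘ σ) = F V

/-!
Exchanging the `i`-th particle with an additional one is a measure-preserving involution of
configuration space times one-particle space, and the `i`-th term of the Fisher information is the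
integral of `(√A - √B)²`, where `A` is `G` times the kernel and the weight, and `B` is what `A`
becomes under the exchange. The function `(a, b) ↦ (√a - √b)²` is jointly convex, whence convexity.
For `m > 0` it is at least `(1 - m) a + (1 - m⁻¹) b`, with equality for `m = √b / √a`. Approximating
the optimal multiplier by a continuous function with values in some `[δ, δ⁻¹]` exhibits the integral
as a supremum of functionals that are continuous for weak convergence. This needs a continuous,
compactly supported kernel; the singular one is a limit from below of such kernels off the
diagonal, where nothing is lost since the increment vanishes on the diagonal. For a tensor product
the other particles integrate out to one.
-/

open Filter Topology Set
open scoped BoundedContinuousFunction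

section HellingerIntegrand

variable {a b δ l : ℝ}

theorem convexOn_sq_sqrt_sub_sqrt :
    ConvexOn ℝ (Ici (0 : ℝ) ×ˢ Ici (0 : ℝ)) fun p => (√p.1 - √p.2) ^ 2 := by
  refine ⟨(convex_Ici 0).prod (convex_Ici 0), ?_⟩
  rintro ⟨x, y⟩ ⟨hx, hy⟩ ⟨x', y'⟩ ⟨hx', hy'⟩ s t hs ht -
  simp only [mem_Ici] at hx hy hx' hy'
  -- After expanding the squares, this is the Cauchy–Schwarz inequality for the vectors
  -- `(√(s x), √(t x'))` and `(√(s y), √(t y'))`.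
  have cauchy_schwarz :
      s * (√x * √y) + t * (√x' * √y') ≤ √(s * x + t * x') * √(s * y + t * y') := by
    have := Real.sum_sqrt_mul_sqrt_le .univ (f := ![s * x, t * x']) (g := ![s * y, t * y'])
      (by simp [Fin.forall_fin_two, *, mul_nonneg]) (by simp [Fin.forall_fin_two, *, mul_nonneg])
    simp only [Fin.sum_univ_two, Matrix.cons_val_zero, Matrix.cons_val_one, Real.sqrt_mul, hs, ht]
      at this
    rwa [mul_mul_mul_comm, mul_mul_mul_comm √t, Real.mul_self_sqrt hs,
      Real.mul_self_sqrt ht] at this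
  have expand {a b : ℝ} (ha : 0 ≤ a) (hb : 0 ≤ b) : (√a - √b) ^ 2 = a + b - 2 * (√a * √b) := by
    rw [sub_sq, Real.sq_sqrt ha, Real.sq_sqrt hb]
    ring
  simp only [Prod.fst_add, Prod.snd_add, Prod.smul_fst, Prod.smul_snd, smul_eq_mul]
  rw [expand (by positivity) (by positivity), expand hx hy, expand hx' hy']
  linarith

theorem one_sub_mul_add_one_sub_inv_mul_le_sq_sqrt_sub_sqrt (ha : 0 ≤ a) (hb : 0 ≤ b)
    (hl : 0 < l) : (1 - l) * a + (1 - l⁻¹) * b ≤ (√a - √b) ^ 2 := by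
  have hsq : (√a - √b) ^ 2 - ((1 - l) * √a ^ 2 + (1 - l⁻¹) * √b ^ 2) = (l * √a - √b) ^ 2 / l := by
    field_simp
    ring
  rw [Real.sq_sqrt ha, Real.sq_sqrt hb] at hsq
  have : 0 ≤ (l * √a - √b) ^ 2 / l := by positivity
  linarith

/-- The multiplier `l` that is optimal in
`(√a - √b) ^ 2 = sup_{l > 0} (1 - l) * a + (1 - l⁻¹) * b`, namely `√b / √a`, regularised so as to
stay in `[δ, δ⁻¹]`. The maximum only matters for `a = b = 0`, where the quotient is `0 / 0 = 0`. -/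
def dualMultiplier (δ a b : ℝ) : ℝ := max δ ((√b + δ * √a) / (√a + δ * √b))

theorem dualMultiplier_mem_Icc (hδ : 0 < δ) (hδ1 : δ ≤ 1) (a b : ℝ) :
    dualMultiplier δ a b ∈ Icc δ δ⁻¹ := by
  have hδ' : δ ≤ δ⁻¹ := hδ1.trans ((one_le_inv₀ hδ).2 hδ1)
  refine ⟨le_max_left _ _, max_le hδ' (div_le_of_le_mul₀ (by positivity) (by positivity) ?_)⟩
  calc √b + δ * √a ≤ √b + δ⁻¹ * √a := by gcongr
    _ = δ⁻¹ * (√a + δ * √b) := by field_simp; ring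

theorem sq_sqrt_sub_sqrt_le_dualMultiplier (hδ : 0 < δ) (hδ1 : δ ≤ 1) (ha : 0 ≤ a) (hb : 0 ≤ b) :
    (√a - √b) ^ 2 ≤ (1 - dualMultiplier δ a b) * a + (1 - (dualMultiplier δ a b)⁻¹) * b
      + δ * (a + b) := by
  obtain ⟨p, hp, rfl⟩ : ∃ p, 0 ≤ p ∧ p ^ 2 = a := ⟨√a, Real.sqrt_nonneg a, Real.sq_sqrt ha⟩
  obtain ⟨q, hq, rfl⟩ : ∃ q, 0 ≤ q ∧ q ^ 2 = b := ⟨√b, Real.sqrt_nonneg b, Real.sq_sqrt hb⟩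
  obtain ⟨rfl, rfl⟩ | hpq : p = 0 ∧ q = 0 ∨ 0 < p + δ * q ∧ 0 < q + δ * p := by
    rcases hp.eq_or_lt with rfl | hp <;> rcases hq.eq_or_lt with rfl | hq <;>
      first | exact .inl ⟨rfl, rfl⟩ | exact .inr ⟨by positivity, by positivity⟩
  · simp
  have hl : dualMultiplier δ (p ^ 2) (q ^ 2) = (q + δ * p) / (p + δ * q) := by
    simp only [dualMultiplier, Real.sqrt_sq, hp, hq]
    refine max_eq_right ((le_div_iff₀ hpq.1).2 ?_)
    nlinarith [mul_le_of_le_one_left hq (show δ * δ ≤ 1 by nlinarith)]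
  have bound {p q : ℝ} (hp : 0 ≤ p) (hq : 0 ≤ q) (h : 0 < p + δ * q) :
      (q + δ * p) / (p + δ * q) * p ^ 2 ≤ p * q + δ * p ^ 2 := by
    rw [div_mul_eq_mul_div, div_le_iff₀ h]
    have : 0 ≤ δ * (p * q ^ 2) + δ ^ 2 * p ^ 2 * q := by positivity
    linarith
  have hp_bound := bound hp hq hpq.1
  have hq_bound := bound hq hp hpq.2
  rw [Real.sqrt_sq hp, Real.sqrt_sq hq, hl, inv_div]
  linarith

end HellingerIntegrand

section HellingerLsc

open TopologicalSpace

variable {X : Type*} [MeasurableSpace X] {μ : Measure X}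

/-- The affine functional of `(A, B)` with multiplier `l` in the dual formula
`∫ (√A - √B) ^ 2 ∂μ = sup_{l > 0} ∫ (1 - l) * A + (1 - l⁻¹) * B ∂μ`. -/
def hellingerDual (μ : Measure X) (A B l : X → ℝ) : ℝ :=
  ∫ x, ((1 - l x) * A x + (1 - (l x)⁻¹) * B x) ∂μ

variable {A B l m : X → ℝ} {δ ε : ℝ}

theorem integrable_one_sub_mul (hA : Integrable A μ) (hl : AEStronglyMeasurable l μ)
    (hδl : ∀ x, l x ∈ Icc δ δ⁻¹) : Integrable (fun x => (1 - l x) * A x) μ :=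
  hA.bdd_mul (c := 1 + max |δ| |δ⁻¹|) (by fun_prop) <| .of_forall fun x =>
    (norm_sub_le _ _).trans <| by
      simpa using abs_le_max_abs_abs (hδl x).1 (hδl x).2

theorem inv_mem_Icc_inv (hδ : 0 < δ) {t : ℝ} (ht : t ∈ Icc δ δ⁻¹) : t⁻¹ ∈ Icc δ δ⁻¹ :=
  ⟨(le_inv_comm₀ hδ (hδ.trans_le ht.1)).2 ht.2, inv_anti₀ hδ ht.1⟩

theorem integrable_hellingerDual (hA : Integrable A μ) (hB : Integrable B μ)
    (hl : AEStronglyMeasurable l μ) (hδ : 0 < δ) (hδl : ∀ x, l x ∈ Icc δ δ⁻¹) :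
    Integrable (fun x => (1 - l x) * A x + (1 - (l x)⁻¹) * B x) μ :=
  (integrable_one_sub_mul hA hl hδl).add
    (integrable_one_sub_mul hB hl.aemeasurable.inv.aestronglyMeasurable
      fun x => inv_mem_Icc_inv hδ (hδl x))

theorem ofReal_integral_le_lintegral_ofReal (f : X → ℝ) :
    ENNReal.ofReal (∫ x, f x ∂μ) ≤ ∫⁻ x, ENNReal.ofReal (f x) ∂μ := by
  by_cases hf : Integrable f μ
  · rw [integral_eq_lintegral_pos_part_sub_lintegral_neg_part hf]
    exact ENNReal.ofReal_le_of_le_toReal (sub_le_self _ toReal_nonneg)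
  · simp [integral_undef hf]

theorem ofReal_hellingerDual_le (hA₀ : ∀ x, 0 ≤ A x) (hB₀ : ∀ x, 0 ≤ B x) (hl : ∀ x, 0 < l x) :
    ENNReal.ofReal (hellingerDual μ A B l) ≤ ∫⁻ x, ENNReal.ofReal ((√(A x) - √(B x)) ^ 2) ∂μ :=
  (ofReal_integral_le_lintegral_ofReal _).trans <| lintegral_mono fun x =>
    ENNReal.ofReal_le_ofReal <|
      one_sub_mul_add_one_sub_inv_mul_le_sq_sqrt_sub_sqrt (hA₀ x) (hB₀ x) (hl x)

theorem abs_inv_sub_inv_le {s t : ℝ} (hδ : 0 < δ) (hs : δ ≤ s) (ht : δ ≤ t) :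
    |s⁻¹ - t⁻¹| ≤ (δ ^ 2)⁻¹ * |s - t| := by
  have hs₀ := hδ.trans_le hs
  have ht₀ := hδ.trans_le ht
  rw [inv_sub_inv hs₀.ne' ht₀.ne', abs_div, abs_sub_comm, abs_of_pos (mul_pos hs₀ ht₀),
    div_eq_inv_mul, sq]
  gcongr

theorem hellingerDual_le_add (hA : Integrable A μ) (hB : Integrable B μ) (hA₀ : ∀ x, 0 ≤ A x)
    (hB₀ : ∀ x, 0 ≤ B x) (hl : AEStronglyMeasurable l μ) (hm : AEStronglyMeasurable m μ)
    (hδ : 0 < δ) (hδ1 : δ ≤ 1) (hδl : ∀ x, l x ∈ Icc δ δ⁻¹) (hδm : ∀ x, m x ∈ Icc δ δ⁻¹) :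
    hellingerDual μ A B l ≤
      hellingerDual μ A B m + (δ ^ 2)⁻¹ * ∫ x, (A x + B x) * |l x - m x| ∂μ := by
  have h_int : Integrable (fun x => (A x + B x) * |l x - m x|) μ := by
    refine (hA.add hB).mul_bdd (c := δ⁻¹ - δ) (by fun_prop) (.of_forall fun x => ?_)
    rw [Real.norm_eq_abs, abs_abs]
    exact abs_sub_le_of_le_of_le (hδl x).1 (hδl x).2 (hδm x).1 (hδm x).2
  rw [hellingerDual, hellingerDual, ← integral_const_mul,
    ← integral_add (integrable_hellingerDual hA hB hm hδ hδm) (h_int.const_mul _)]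
  refine integral_mono (integrable_hellingerDual hA hB hl hδ hδl)
    ((integrable_hellingerDual hA hB hm hδ hδm).add (h_int.const_mul _)) fun x => ?_
  have h_mul : (m x - l x) * A x ≤ (δ ^ 2)⁻¹ * |l x - m x| * A x := by
    have : 1 ≤ (δ ^ 2)⁻¹ := (one_le_inv₀ (by positivity)).2 (pow_le_one₀ hδ.le hδ1)
    refine mul_le_mul_of_nonneg_right ?_ (hA₀ x)
    rw [abs_sub_comm]
    exact (le_abs_self _).trans (le_mul_of_one_le_left (abs_nonneg _) this)
  have h_inv : ((m x)⁻¹ - (l x)⁻¹) * B x ≤ (δ ^ 2)⁻¹ * |l x - m x| * B x := by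
    refine mul_le_mul_of_nonneg_right ?_ (hB₀ x)
    rw [abs_sub_comm]
    exact (le_abs_self _).trans (abs_inv_sub_inv_le hδ (hδm x).1 (hδl x).1)
  simp only
  linarith

theorem exists_lintegral_sq_sqrt_sub_sqrt_le (hA : Integrable A μ) (hB : Integrable B μ)
    (hA₀ : ∀ x, 0 ≤ A x) (hB₀ : ∀ x, 0 ≤ B x) (hε : 0 < ε) :
    ∃ δ ∈ Ioc (0 : ℝ) 1, ∃ l : X → ℝ, AEStronglyMeasurable l μ ∧ (∀ x, l x ∈ Icc δ δ⁻¹) ∧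
      ∫⁻ x, ENNReal.ofReal ((√(A x) - √(B x)) ^ 2) ∂μ ≤
        ENNReal.ofReal (hellingerDual μ A B l + ε) := by
  have hAB : Integrable (fun x => A x + B x) μ := hA.add hB
  obtain ⟨δ, ⟨hδ, hδ1⟩, hδε⟩ : ∃ δ ∈ Ioc (0 : ℝ) 1, δ * ∫ x, A x + B x ∂μ ≤ ε := by
    have hM : 0 ≤ ∫ x, A x + B x ∂μ := integral_nonneg fun x => add_nonneg (hA₀ x) (hB₀ x)
    refine ⟨min 1 (ε / (1 + ∫ x, A x + B x ∂μ)), ⟨by positivity, min_le_left _ _⟩, ?_⟩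
    calc _ ≤ ε / (1 + ∫ x, A x + B x ∂μ) * (1 + ∫ x, A x + B x ∂μ) := by
          gcongr
          exacts [min_le_right _ _, le_add_of_nonneg_left zero_le_one]
      _ = ε := div_mul_cancel₀ _ (by positivity)
  let l x := dualMultiplier δ (A x) (B x)
  have hl_mem x : l x ∈ Icc δ δ⁻¹ := dualMultiplier_mem_Icc hδ hδ1 _ _
  have hl : AEStronglyMeasurable l μ := by
    have := hA.aemeasurable
    have := hB.aemeasurable
    refine AEMeasurable.aestronglyMeasurable ?_
    unfold l dualMultiplier
    fun_prop
  refine ⟨δ, ⟨hδ, hδ1⟩, l, hl, hl_mem, ?_⟩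
  have hl_int := integrable_hellingerDual hA hB hl hδ hl_mem
  have h_opt x : (√(A x) - √(B x)) ^ 2 ≤
      (1 - l x) * A x + (1 - (l x)⁻¹) * B x + δ * (A x + B x) :=
    sq_sqrt_sub_sqrt_le_dualMultiplier hδ hδ1 (hA₀ x) (hB₀ x)
  calc ∫⁻ x, ENNReal.ofReal ((√(A x) - √(B x)) ^ 2) ∂μ
      ≤ ∫⁻ x, ENNReal.ofReal ((1 - l x) * A x + (1 - (l x)⁻¹) * B x + δ * (A x + B x)) ∂μ :=
        lintegral_mono fun x => ENNReal.ofReal_le_ofReal (h_opt x)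
    _ = ENNReal.ofReal (hellingerDual μ A B l + δ * ∫ x, A x + B x ∂μ) := by
        rw [hellingerDual, ← integral_const_mul, ← integral_add hl_int (hAB.const_mul δ)]
        exact (ofReal_integral_eq_lintegral_ofReal (hl_int.add (hAB.const_mul δ))
          (.of_forall fun x => (sq_nonneg _).trans (h_opt x))).symm
    _ ≤ ENNReal.ofReal (hellingerDual μ A B l + ε) := by gcongr

variable [TopologicalSpace X]

/-- Weak convergence of `Fs n` to `F`, regarded as (signed) densities with respect to `μ`. -/
def TendstoWeakly {ι : Type*} (μ : Measure X) (L : Filter ι) (Fs : ι → X → ℝ) (F : X → ℝ) : Prop :=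
  ∀ φ : X →ᵇ ℝ, Tendsto (fun n => ∫ x, φ x * Fs n x ∂μ) L (𝓝 (∫ x, φ x * F x ∂μ))

variable {ι : Type*} {L : Filter ι} {As Bs : ι → X → ℝ}

theorem TendstoWeakly.tendsto_integral_one_sub_mul (h : TendstoWeakly μ L As A) (hm : Continuous m)
    (hm_mem : ∀ x, m x ∈ Icc δ δ⁻¹) :
    Tendsto (fun n => ∫ x, (1 - m x) * As n x ∂μ) L (𝓝 (∫ x, (1 - m x) * A x ∂μ)) :=
  h <| .ofNormedAddCommGroup (fun x => 1 - m x) (by fun_prop) (1 + max |δ| |δ⁻¹|)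
    fun x => (norm_sub_le _ _).trans <| by
      simpa using abs_le_max_abs_abs (hm_mem x).1 (hm_mem x).2

variable [BorelSpace X]

theorem tendsto_hellingerDual (hA : Integrable A μ) (hB : Integrable B μ)
    (hAs : ∀ n, Integrable (As n) μ) (hBs : ∀ n, Integrable (Bs n) μ)
    (hA_lim : TendstoWeakly μ L As A) (hB_lim : TendstoWeakly μ L Bs B)
    (hm : Continuous m) (hδ : 0 < δ) (hm_mem : ∀ x, m x ∈ Icc δ δ⁻¹) :
    Tendsto (fun n => hellingerDual μ (As n) (Bs n) m) L (𝓝 (hellingerDual μ A B m)) := by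
  have hm_inv : Continuous fun x => (m x)⁻¹ := hm.inv₀ fun x => (hδ.trans_le (hm_mem x).1).ne'
  have hm_inv_mem x : (m x)⁻¹ ∈ Icc δ δ⁻¹ := inv_mem_Icc_inv hδ (hm_mem x)
  have split {A B : X → ℝ} (hA : Integrable A μ) (hB : Integrable B μ) : hellingerDual μ A B m =
      ∫ x, (1 - m x) * A x ∂μ + ∫ x, (1 - (m x)⁻¹) * B x ∂μ :=
    integral_add (integrable_one_sub_mul hA hm.aestronglyMeasurable hm_mem)
      (integrable_one_sub_mul hB hm_inv.aestronglyMeasurable hm_inv_mem)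
  simp only [split, hA, hB, hAs, hBs]
  exact (hA_lim.tendsto_integral_one_sub_mul hm hm_mem).add
    (hB_lim.tendsto_integral_one_sub_mul hm_inv hm_inv_mem)

variable [PseudoMetrizableSpace X]

theorem exists_continuous_integral_mul_abs_sub_le {w : X → ℝ} {a b : ℝ} (hw : Integrable w μ)
    (hw₀ : ∀ x, 0 ≤ w x) (hl : AEStronglyMeasurable l μ) (hab : a ≤ b)
    (hl_mem : ∀ x, l x ∈ Icc a b) (hε : 0 < ε) :
    ∃ m : X → ℝ, Continuous m ∧ (∀ x, m x ∈ Icc a b) ∧ ∫ x, w x * |l x - m x| ∂μ ≤ ε := by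
  set ν := μ.withDensity fun x => ENNReal.ofReal (w x)
  have integral_ν (f : X → ℝ) : ∫ x, f x ∂ν = ∫ x, w x * f x ∂μ := by
    rw [integral_withDensity_eq_integral_toReal_smul₀ hw.aemeasurable.ennreal_ofReal
      (.of_forall fun _ => ofReal_lt_top)]
    simp only [toReal_ofReal (hw₀ _), smul_eq_mul]
  have : IsFiniteMeasure ν := isFiniteMeasure_withDensity_ofReal hw.2
  have hlν : AEStronglyMeasurable l ν := hl.mono_ac (withDensity_absolutelyContinuous _ _)
  have hl_int : Integrable l ν := .of_bound hlν (max |a| |b|)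
    (.of_forall fun x => abs_le_max_abs_abs (hl_mem x).1 (hl_mem x).2)
  obtain ⟨g, hg, g_int⟩ := hl_int.exists_boundedContinuous_integral_sub_le hε
  let m x : ℝ := projIcc a b hab (g x)
  have hm : Continuous m := by fun_prop
  have hm_mem x : m x ∈ Icc a b := Subtype.coe_prop _
  refine ⟨m, hm, hm_mem, ?_⟩
  have h_le x : |l x - m x| ≤ ‖l x - g x‖ := by
    have := abs_projIcc_sub_projIcc hab (c := l x) (d := g x)
    rwa [projIcc_of_mem hab (hl_mem x)] at this
  rw [← integral_ν]
  exact (integral_mono_of_nonneg (.of_forall fun _ => abs_nonneg _) (hl_int.sub g_int).norm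
    (.of_forall h_le)).trans hg

theorem exists_continuous_lintegral_sq_sqrt_sub_sqrt_le (hA : Integrable A μ) (hB : Integrable B μ)
    (hA₀ : ∀ x, 0 ≤ A x) (hB₀ : ∀ x, 0 ≤ B x) (hε : 0 < ε) :
    ∃ δ > 0, ∃ m : X → ℝ, Continuous m ∧ (∀ x, m x ∈ Icc δ δ⁻¹) ∧
      ∫⁻ x, ENNReal.ofReal ((√(A x) - √(B x)) ^ 2) ∂μ ≤
        ENNReal.ofReal (hellingerDual μ A B m + ε) := by
  obtain ⟨δ, ⟨hδ, hδ1⟩, l, hl, hl_mem, h_le⟩ :=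
    exists_lintegral_sq_sqrt_sub_sqrt_le hA hB hA₀ hB₀ (half_pos hε)
  obtain ⟨m, hm, hm_mem, hlm⟩ := exists_continuous_integral_mul_abs_sub_le (hA.add hB)
    (fun x => add_nonneg (hA₀ x) (hB₀ x)) hl (hδ1.trans ((one_le_inv₀ hδ).2 hδ1)) hl_mem
    (show 0 < δ ^ 2 * (ε / 2) by positivity)
  refine ⟨δ, hδ, m, hm, hm_mem, h_le.trans (ENNReal.ofReal_le_ofReal ?_)⟩
  calc hellingerDual μ A B l + ε / 2
      ≤ hellingerDual μ A B m + (δ ^ 2)⁻¹ * (δ ^ 2 * (ε / 2)) + ε / 2 := by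
        refine add_le_add_left ((hellingerDual_le_add hA hB hA₀ hB₀ hl hm.aestronglyMeasurable
          hδ hδ1 hl_mem hm_mem).trans ?_) _
        gcongr
        exact hlm
    _ = hellingerDual μ A B m + ε := by
        rw [inv_mul_cancel_left₀ (by positivity)]
        ring

theorem lintegral_sq_sqrt_sub_sqrt_le_liminf [L.NeBot] (hA : Integrable A μ) (hB : Integrable B μ)
    (hAs : ∀ n, Integrable (As n) μ) (hBs : ∀ n, Integrable (Bs n) μ)
    (hA₀ : ∀ x, 0 ≤ A x) (hB₀ : ∀ x, 0 ≤ B x)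
    (hAs₀ : ∀ n x, 0 ≤ As n x) (hBs₀ : ∀ n x, 0 ≤ Bs n x)
    (hA_lim : TendstoWeakly μ L As A) (hB_lim : TendstoWeakly μ L Bs B) :
    ∫⁻ x, ENNReal.ofReal ((√(A x) - √(B x)) ^ 2) ∂μ ≤
      liminf (fun n => ∫⁻ x, ENNReal.ofReal ((√(As n x) - √(Bs n x)) ^ 2) ∂μ) L := by
  refine ENNReal.le_of_forall_pos_le_add fun ε hε _ => ?_
  obtain ⟨δ, hδ, m, hm, hm_mem, h_le⟩ :=
    exists_continuous_lintegral_sq_sqrt_sub_sqrt_le hA hB hA₀ hB₀ (NNReal.coe_pos.2 hε)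
  have h_lim := ENNReal.tendsto_ofReal
    (tendsto_hellingerDual hA hB hAs hBs hA_lim hB_lim hm hδ hm_mem)
  calc ∫⁻ x, ENNReal.ofReal ((√(A x) - √(B x)) ^ 2) ∂μ
      ≤ ENNReal.ofReal (hellingerDual μ A B m + ε) := h_le
    _ ≤ ENNReal.ofReal (hellingerDual μ A B m) + ε := by
        simpa using ENNReal.ofReal_add_le (p := hellingerDual μ A B m) (q := ε)
    _ = liminf (fun n => ENNReal.ofReal (hellingerDual μ (As n) (Bs n) m)) L + ε := by
        rw [h_lim.liminf_eq]
    _ ≤ _ := by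
        gcongr
        exact liminf_le_liminf (.of_forall fun n =>
          ofReal_hellingerDual_le (hAs₀ n) (hBs₀ n) fun x => hδ.trans_le (hm_mem x).1)

end HellingerLsc

section Kernels

open TopologicalSpace

variable {X : Type*} [TopologicalSpace X]

theorem exists_seq_hasCompactSupport_le_of_continuousOn [R1Space X] [LocallyCompactSpace X]
    [SecondCountableTopology X] {U : Set X} (hU : IsOpen U) {K : X → ℝ} (hK : ContinuousOn K U)
    (hK₀ : ∀ x, 0 ≤ K x) :
    ∃ Ks : ℕ → X → ℝ, (∀ n, Continuous (Ks n)) ∧ (∀ n, HasCompactSupport (Ks n)) ∧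
      (∀ n x, 0 ≤ Ks n x ∧ Ks n x ≤ K x) ∧ ∀ x ∈ U, ∀ᶠ n in atTop, Ks n x = K x := by
  have := hU.locallyCompactSpace
  let C := CompactExhaustion.choice U
  have hC n : IsCompact ((↑) '' C n : Set X) := (C.isCompact n).image continuous_subtype_val
  choose θ hθ_one hθ_compact hθU hθ using fun n =>
    exists_continuousMap_one_of_isCompact_subset_isOpen (hC n) hU (Subtype.coe_image_subset U _)
  have hθK n : tsupport (fun x => θ n x * K x) ⊆ tsupport (θ n) := tsupport_mul_subset_left
  refine ⟨fun n x => θ n x * K x, fun n => ?_, fun n => ?_, fun n x => ⟨?_, ?_⟩, fun x hx => ?_⟩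
  · exact ((θ n).continuous.continuousOn.mul hK).continuous_of_tsupport_subset hU
      ((hθK n).trans (hθU n))
  · exact (hθ_compact n).of_isClosed_subset (isClosed_tsupport _) (hθK n)
  · exact mul_nonneg (hθ n x).1 (hK₀ x)
  · exact mul_le_of_le_one_left (hK₀ x) (hθ n x).2
  · obtain ⟨k, hk⟩ := C.exists_mem ⟨x, hx⟩
    filter_upwards [eventually_ge_atTop k] with n hn
    rw [hθ_one n ⟨_, C.subset hn hk, rfl⟩, Pi.one_apply, one_mul]

theorem exists_integrable_bound_of_hasCompactSupport {Y : Type*} [TopologicalSpace Y] [T2Space Y]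
    [MeasurableSpace Y] [OpensMeasurableSpace Y] {μ : Measure Y} [IsFiniteMeasureOnCompacts μ]
    {K : X × Y → ℝ} (hK : Continuous K) (hK_supp : HasCompactSupport K) :
    ∃ ρ : Y → ℝ, Integrable ρ μ ∧ ∀ p, |K p| ≤ ρ p.2 := by
  obtain ⟨C, hC⟩ := hK_supp.exists_bound_of_continuous hK
  have hS : IsCompact (Prod.snd '' tsupport K) := hK_supp.isCompact.image continuous_snd
  refine ⟨(Prod.snd '' tsupport K).indicator fun _ => C, ?_, fun p => ?_⟩
  · exact (integrableOn_const hS.measure_lt_top.ne).integrable_indicator hS.measurableSet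
  · by_cases hp : p ∈ tsupport K
    · exact (hC p).trans_eq (indicator_of_mem (mem_image_of_mem _ hp) fun _ => C).symm
    · rw [image_eq_zero_of_notMem_tsupport hp, abs_zero]
      exact indicator_nonneg (fun _ _ => (norm_nonneg _).trans (hC p)) _

end Kernels

section WeakConvergence

open TopologicalSpace

variable {X Y ι : Type*} [TopologicalSpace X] [MeasurableSpace X] [TopologicalSpace Y]
  [MeasurableSpace Y] {μ : Measure X} {ν : Measure Y} {L : Filter ι} {Fs : ι → X → ℝ} {F : X → ℝ}

theorem TendstoWeakly.comp_homeomorph [BorelSpace X] [BorelSpace Y] (h : TendstoWeakly μ L Fs F)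
    (e : Y ≃ₜ X) (he : MeasurePreserving e ν μ) :
    TendstoWeakly ν L (fun n => Fs n ∘ e) (F ∘ e) := by
  intro φ
  have transfer (F : X → ℝ) : ∫ y, φ y * (F ∘ e) y ∂ν = ∫ x, φ (e.symm x) * F x ∂μ := by
    rw [← he.integral_comp e.measurableEmbedding]
    simp only [Function.comp_apply, e.symm_apply_apply]
  simp only [transfer]
  exact h (φ.compContinuous (e.symm : C(X, Y)))

section Kernel

variable {κ : X × Y → ℝ} {ρ : Y → ℝ}

theorem integrable_kernel_mul [SecondCountableTopologyEither X Y] [OpensMeasurableSpace X]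
    [OpensMeasurableSpace Y] [SFinite μ] [SFinite ν] (hκ : Continuous κ) (hρ : Integrable ρ ν)
    (hκρ : ∀ p, |κ p| ≤ ρ p.2) (hF : Integrable F μ) :
    Integrable (fun p : X × Y => κ p * F p.1) (μ.prod ν) :=
  (hF.mul_prod hρ).mono (hκ.aestronglyMeasurable.mul hF.aestronglyMeasurable.comp_fst) <|
    .of_forall fun p => by
      rw [norm_mul, norm_mul, mul_comm]
      gcongr
      exact (hκρ p).trans (le_abs_self _)

theorem TendstoWeakly.kernel_mul [FirstCountableTopology X] [SecondCountableTopologyEither X Y]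
    [OpensMeasurableSpace X] [OpensMeasurableSpace Y] [SFinite μ] [SFinite ν]
    (h : TendstoWeakly μ L Fs F) (hFs : ∀ n, Integrable (Fs n) μ) (hF : Integrable F μ)
    (hκ : Continuous κ) (hρ : Integrable ρ ν) (hκρ : ∀ p, |κ p| ≤ ρ p.2) :
    TendstoWeakly (μ.prod ν) L (fun n p => κ p * Fs n p.1) (fun p => κ p * F p.1) := by
  intro φ
  let Φ x := ∫ y, φ (x, y) * κ (x, y) ∂ν
  have h_bound x y : ‖φ (x, y) * κ (x, y)‖ ≤ ‖φ‖ * ρ y := by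
    rw [norm_mul]
    gcongr
    exacts [φ.norm_coe_le_norm _, hκρ (x, y)]
  have hφκ : Continuous fun p => φ p * κ p := φ.continuous.mul hκ
  have hΦ : Continuous Φ := continuous_of_dominated
    (fun x => (hφκ.comp (.prodMk_right x)).aestronglyMeasurable)
    (fun x => .of_forall (h_bound x)) (hρ.const_mul _)
    (.of_forall fun y => hφκ.comp (.prodMk_left y))
  have hΦ_bound x : ‖Φ x‖ ≤ ∫ y, ‖φ‖ * ρ y ∂ν :=
    norm_integral_le_of_norm_le (hρ.const_mul _) (.of_forall (h_bound x))
  have fubini {F : X → ℝ} (hF : Integrable F μ) :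
      ∫ p, φ p * (κ p * F p.1) ∂μ.prod ν = ∫ x, Φ x * F x ∂μ := by
    rw [integral_prod]
    · simp only [Φ, ← mul_assoc, integral_mul_const]
    · exact (integrable_kernel_mul hκ hρ hκρ hF).bdd_mul φ.continuous.aestronglyMeasurable
        (.of_forall φ.norm_coe_le_norm)
  simp only [fubini, hFs, hF]
  exact h (.ofNormedAddCommGroup Φ hΦ _ hΦ_bound)

end Kernel

end WeakConvergence

section ProductMeasure

variable {ι : Type*} [DecidableEq ι]

section Marginal

variable {Y : ι → Type*} [∀ j, MeasurableSpace (Y j)] {μ : ∀ j, Measure (Y j)}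
  [∀ j, SigmaFinite (μ j)]

theorem lmarginal_prod_mul {f : ∀ j, Y j → ℝ≥0∞} (hf : ∀ j, Measurable (f j)) (s : Finset ι)
    (c : ℝ≥0∞) (V₀ : ∀ j, Y j) :
    (∫⋯∫⁻_s, fun V => (∏ j ∈ s, f j (V j)) * c ∂μ) V₀ = (∏ j ∈ s, ∫⁻ y, f j y ∂μ j) * c := by
  induction s using Finset.induction_on generalizing c with
  | empty => simp
  | insert i s hi ih =>
    rw [lmarginal_insert' _ (by fun_prop) hi]
    have integrate_out (V : ∀ j, Y j) :
        ∫⁻ y, (∏ j ∈ insert i s, f j (Function.update V i y j)) * c ∂μ i =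
          (∏ j ∈ s, f j (V j)) * ((∫⁻ y, f i y ∂μ i) * c) := by
      simp only [Finset.prod_insert hi, Function.update_self]
      have h_upd y : ∏ j ∈ s, f j (Function.update V i y j) = ∏ j ∈ s, f j (V j) :=
        Finset.prod_congr rfl fun j hj => by
          rw [Function.update_of_ne (ne_of_mem_of_not_mem hj hi)]
      simp only [h_upd, mul_assoc]
      rw [lintegral_mul_const _ (hf i), mul_left_comm]
    simp only [integrate_out, ih]
    rw [Finset.prod_insert hi]
    ring

theorem lintegral_pi_prod_eq_lmarginal_erase [Fintype ι] {Z : Type*} [MeasurableSpace Z]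
    {ν : Measure Z} [SFinite ν] (i : ι) {g : (∀ j, Y j) × Z → ℝ≥0∞} (hg : Measurable g)
    (V₀ : ∀ j, Y j) :
    ∫⁻ p, g p ∂(Measure.pi μ).prod ν =
      (∫⋯∫⁻_Finset.univ.erase i,
        fun V => ∫⁻ y, ∫⁻ w, g (Function.update V i y, w) ∂ν ∂μ i ∂μ) V₀ := by
  rw [lintegral_prod _ hg.aemeasurable, lintegral_eq_lmarginal_univ V₀,
    lmarginal_erase' _ hg.lintegral_prod_right' (Finset.mem_univ i)]

end Marginal

variable {Y : Type*} [TopologicalSpace Y]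

/-- The involution of configuration space times one-particle space that exchanges the `i`-th
particle of the configuration with the additional one. -/
@[simps]
def exchangeHomeomorph (i : ι) : (ι → Y) × Y ≃ₜ (ι → Y) × Y where
  toFun p := (Function.update p.1 i p.2, p.1 i)
  invFun p := (Function.update p.1 i p.2, p.1 i)
  left_inv p := by simp
  right_inv p := by simp
  continuous_toFun := by fun_prop
  continuous_invFun := by fun_prop

theorem measurePreserving_exchangeHomeomorph [Fintype ι] [MeasurableSpace Y] (μ : Measure Y)
    [SigmaFinite μ] (i : ι) : MeasurePreserving (exchangeHomeomorph (Y := Y) i)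
      ((Measure.pi fun _ => μ).prod μ) ((Measure.pi fun _ => μ).prod μ) := by
  have h_meas : Measurable (exchangeHomeomorph (Y := Y) i) :=
    measurable_update'.prodMk (by fun_prop)
  refine ⟨h_meas, Measure.ext_of_lintegral _ fun f hf => ?_⟩
  rcases isEmpty_or_nonempty Y with _ | ⟨⟨y₀⟩⟩
  · simp [Measure.eq_zero_of_isEmpty μ]
  have hf_comp : Measurable fun p => f (exchangeHomeomorph i p) := hf.comp h_meas
  rw [lintegral_map hf h_meas, lintegral_pi_prod_eq_lmarginal_erase i hf fun _ => y₀,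
    lintegral_pi_prod_eq_lmarginal_erase i hf_comp fun _ => y₀]
  congr 1 with V
  rw [lintegral_lintegral_swap]
  · simp
  · fun_prop

end ProductMeasure

section ExchangeEnergy

variable {ι Y : Type*} [DecidableEq ι]

/-- The squared difference of `√(ω G)` before and after the `i`-th particle of the configuration
`p.1` is moved to the position `p.2`, weighted by the kernel `K`. -/
def exchangeIntegrand (K : Y × Y → ℝ) (ω : Y → ℝ) (i : ι) (G : (ι → Y) → ℝ) (p : (ι → Y) × Y) : ℝ :=
  (√(ω (p.1 i) * G p.1) - √(ω p.2 * G (Function.update p.1 i p.2))) ^ 2 * K (p.1 i, p.2)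

/-- The contribution of the `i`-th particle to the Fisher information of `G`, for a general kernel
`K` and weight `ω`. The weight stands under the root, which makes it the square of the weight
multiplying `√G`. -/
def exchangeEnergy [Fintype ι] [MeasurableSpace Y] (μ : Measure Y) (K : Y × Y → ℝ) (ω : Y → ℝ)
    (i : ι) (G : (ι → Y) → ℝ) : ℝ≥0∞ :=
  ∫⁻ p, ENNReal.ofReal (exchangeIntegrand K ω i G p) ∂(Measure.pi fun _ => μ).prod μ

variable {K : Y × Y → ℝ} {ω : Y → ℝ} {i : ι} {G H : (ι → Y) → ℝ}

theorem exchangeIntegrand_convexCombo_le (hK₀ : ∀ q, 0 ≤ K q) (hω₀ : ∀ y, 0 ≤ ω y)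
    (hG₀ : ∀ V, 0 ≤ G V) (hH₀ : ∀ V, 0 ≤ H V) {s t : ℝ} (hs : 0 ≤ s) (ht : 0 ≤ t)
    (hst : s + t = 1) (p : (ι → Y) × Y) :
    exchangeIntegrand K ω i (fun V => s * G V + t * H V) p ≤
      s * exchangeIntegrand K ω i G p + t * exchangeIntegrand K ω i H p := by
  have := convexOn_sq_sqrt_sub_sqrt.2
    (x := (ω (p.1 i) * G p.1, ω p.2 * G (Function.update p.1 i p.2)))
    (y := (ω (p.1 i) * H p.1, ω p.2 * H (Function.update p.1 i p.2)))
    ⟨mul_nonneg (hω₀ _) (hG₀ _), mul_nonneg (hω₀ _) (hG₀ _)⟩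
    ⟨mul_nonneg (hω₀ _) (hH₀ _), mul_nonneg (hω₀ _) (hH₀ _)⟩ hs ht hst
  simp only [Prod.fst_add, Prod.snd_add, Prod.smul_fst, Prod.smul_snd, smul_eq_mul] at this
  have h_weight (y : Y) (V : ι → Y) :
      ω y * (s * G V + t * H V) = s * (ω y * G V) + t * (ω y * H V) := by ring
  simp only [exchangeIntegrand, h_weight]
  linarith [mul_le_mul_of_nonneg_right this (hK₀ (p.1 i, p.2))]

variable [MeasurableSpace Y]

theorem measurable_exchangeIntegrand (hK : Measurable K) (hω : Measurable ω) (hG : Measurable G) :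
    Measurable (exchangeIntegrand K ω i G) := by
  have : Measurable fun p : (ι → Y) × Y => G (Function.update p.1 i p.2) :=
    hG.comp measurable_update'
  unfold exchangeIntegrand
  fun_prop

variable [Fintype ι] {μ : Measure Y}

theorem exchangeEnergy_mono {K' : Y × Y → ℝ} (h : ∀ q, K q ≤ K' q) :
    exchangeEnergy μ K ω i G ≤ exchangeEnergy μ K' ω i G :=
  lintegral_mono fun _ => ENNReal.ofReal_le_ofReal <| mul_le_mul_of_nonneg_left (h _) (sq_nonneg _)

theorem exchangeEnergy_convexCombo_le (hK : Measurable K) (hK₀ : ∀ q, 0 ≤ K q) (hω : Measurable ω)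
    (hω₀ : ∀ y, 0 ≤ ω y) (hG : Measurable G) (hG₀ : ∀ V, 0 ≤ G V) (hH₀ : ∀ V, 0 ≤ H V) {s t : ℝ}
    (hs : 0 ≤ s) (ht : 0 ≤ t) (hst : s + t = 1) :
    exchangeEnergy μ K ω i (fun V => s * G V + t * H V) ≤
      ENNReal.ofReal s * exchangeEnergy μ K ω i G
        + ENNReal.ofReal t * exchangeEnergy μ K ω i H := by
  have hG_meas : Measurable fun p => ENNReal.ofReal (s * exchangeIntegrand K ω i G p) :=
    ((measurable_exchangeIntegrand hK hω hG).const_mul s).ennreal_ofReal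
  have const_mul {r : ℝ} (hr : 0 ≤ r) (G : (ι → Y) → ℝ) :
      ENNReal.ofReal r * exchangeEnergy μ K ω i G =
        ∫⁻ p, ENNReal.ofReal (r * exchangeIntegrand K ω i G p) ∂(Measure.pi fun _ => μ).prod μ := by
    simp only [exchangeEnergy, ofReal_mul hr, lintegral_const_mul' _ _ ofReal_ne_top]
  rw [const_mul hs, const_mul ht, ← lintegral_add_left hG_meas]
  exact lintegral_mono fun p => (ENNReal.ofReal_le_ofReal
    (exchangeIntegrand_convexCombo_le hK₀ hω₀ hG₀ hH₀ hs ht hst p)).trans ofReal_add_le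

theorem exchangeEnergy_prod [SigmaFinite μ] (hK : Measurable K) (hω : Measurable ω)
    {f : Y → ℝ} (hf : Measurable f) (hf₀ : ∀ y, 0 ≤ f y)
    (hf_mass : ∫⁻ y, ENNReal.ofReal (f y) ∂μ = 1) :
    exchangeEnergy μ K ω i (fun V => ∏ j, f (V j)) =
      ∫⁻ y, ∫⁻ w, ENNReal.ofReal ((√(ω y * f y) - √(ω w * f w)) ^ 2 * K (y, w)) ∂μ ∂μ := by
  rcases isEmpty_or_nonempty Y with _ | ⟨⟨y₀⟩⟩
  · simp [Measure.eq_zero_of_isEmpty μ] at hf_mass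
  let P (V : ι → Y) := ∏ j ∈ Finset.univ.erase i, f (V j)
  have hP₀ V : 0 ≤ P V := Finset.prod_nonneg fun j _ => hf₀ (V j)
  have h_prod V y : ∏ j, f (Function.update V i y j) = P V * f y := by
    rw [← Finset.prod_erase_mul _ _ (Finset.mem_univ i), Function.update_self]
    congr 1
    exact Finset.prod_congr rfl fun j hj => by
      rw [Function.update_of_ne (Finset.ne_of_mem_erase hj)]
  have h_integrand V y w :
      exchangeIntegrand K ω i (fun V => ∏ j, f (V j)) (Function.update V i y, w) =
        P V * ((√(ω y * f y) - √(ω w * f w)) ^ 2 * K (y, w)) := by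
    simp only [exchangeIntegrand, Function.update_self, Function.update_idem, h_prod,
      mul_left_comm (ω _), Real.sqrt_mul (hP₀ V), ← mul_sub, mul_pow, Real.sq_sqrt (hP₀ V)]
    ring
  rw [exchangeEnergy, lintegral_pi_prod_eq_lmarginal_erase i (measurable_exchangeIntegrand hK hω
    (by fun_prop)).ennreal_ofReal fun _ => y₀]
  simp only [h_integrand, ofReal_mul (hP₀ _), lintegral_const_mul' _ _ ofReal_ne_top]
  simp only [P, ofReal_prod_of_nonneg fun _ _ => hf₀ _]
  rw [lmarginal_prod_mul (f := fun _ y => ENNReal.ofReal (f y)) fun _ => hf.ennreal_ofReal]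
  simp only [hf_mass, Finset.prod_const_one, one_mul]

section Semicontinuity

variable {σ : Type*} {L : Filter σ} {Gs : σ → (ι → Y) → ℝ}
  [TopologicalSpace Y] [T2Space Y] [SecondCountableTopology Y]
  [TopologicalSpace.PseudoMetrizableSpace Y] [BorelSpace Y] [SigmaFinite μ]
  [IsFiniteMeasureOnCompacts μ]

theorem exchangeEnergy_le_liminf_of_hasCompactSupport [L.NeBot] (hK : Continuous K)
    (hK_supp : HasCompactSupport K) (hK₀ : ∀ q, 0 ≤ K q) (hω : Continuous ω) (hω₀ : ∀ y, 0 ≤ ω y)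
    (hGs : ∀ n, Integrable (Gs n) (Measure.pi fun _ => μ)) (hGs₀ : ∀ n V, 0 ≤ Gs n V)
    (hG : Integrable G (Measure.pi fun _ => μ)) (hG₀ : ∀ V, 0 ≤ G V)
    (h_lim : TendstoWeakly (Measure.pi fun _ => μ) L Gs G) :
    exchangeEnergy μ K ω i G ≤ liminf (fun n => exchangeEnergy μ K ω i (Gs n)) L := by
  let κ (p : (ι → Y) × Y) := K (p.1 i, p.2) * ω (p.1 i)
  let κ' (p : (ι → Y) × Y) := K (p.2, p.1 i) * ω (p.1 i)
  have hκ : Continuous κ := by fun_prop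
  have hκ' : Continuous κ' := by fun_prop
  obtain ⟨ρ, hρ, hκρ⟩ := exists_integrable_bound_of_hasCompactSupport (μ := μ)
    (K := fun q => K q * ω q.1) (by fun_prop) hK_supp.mul_right
  obtain ⟨ρ', hρ', hκρ'⟩ := exists_integrable_bound_of_hasCompactSupport (μ := μ)
    (K := fun q => K q.swap * ω q.1) (by fun_prop)
    (hK_supp.comp_homeomorph (Homeomorph.prodComm Y Y)).mul_right
  replace hκρ (p : (ι → Y) × Y) : |κ p| ≤ ρ p.2 := hκρ (p.1 i, p.2)
  replace hκρ' (p : (ι → Y) × Y) : |κ' p| ≤ ρ' p.2 := hκρ' (p.1 i, p.2)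
  have hκ₀ p : 0 ≤ κ p := mul_nonneg (hK₀ _) (hω₀ _)
  have hκ'₀ p : 0 ≤ κ' p := mul_nonneg (hK₀ _) (hω₀ _)
  let e := exchangeHomeomorph (Y := Y) i
  have he : MeasurePreserving e _ _ := measurePreserving_exchangeHomeomorph μ i
  have energy_eq (F : (ι → Y) → ℝ) : exchangeEnergy μ K ω i F =
      ∫⁻ p, ENNReal.ofReal ((√(κ p * F p.1) - √(κ' (e p) * F (e p).1)) ^ 2)
        ∂(Measure.pi fun _ => μ).prod μ := by
    refine lintegral_congr fun p => congrArg ENNReal.ofReal ?_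
    simp only [exchangeIntegrand, κ, κ', e, exchangeHomeomorph_apply, Function.update_self,
      mul_assoc, Real.sqrt_mul (hK₀ _), ← mul_sub, mul_pow, Real.sq_sqrt (hK₀ _)]
    ring
  have integrable_exchanged {F : (ι → Y) → ℝ} (hF : Integrable F (Measure.pi fun _ => μ)) :
      Integrable (fun p => κ' (e p) * F (e p).1) ((Measure.pi fun _ => μ).prod μ) :=
    he.integrable_comp_of_integrable (integrable_kernel_mul hκ' hρ' hκρ' hF)
  simp only [energy_eq]
  exact lintegral_sq_sqrt_sub_sqrt_le_liminf (integrable_kernel_mul hκ hρ hκρ hG)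
    (integrable_exchanged hG) (fun n => integrable_kernel_mul hκ hρ hκρ (hGs n))
    (fun n => integrable_exchanged (hGs n)) (fun p => mul_nonneg (hκ₀ p) (hG₀ _))
    (fun p => mul_nonneg (hκ'₀ _) (hG₀ _)) (fun n p => mul_nonneg (hκ₀ p) (hGs₀ n _))
    (fun n p => mul_nonneg (hκ'₀ _) (hGs₀ n _)) (h_lim.kernel_mul hGs hG hκ hρ hκρ)
    ((h_lim.kernel_mul hGs hG hκ' hρ' hκρ').comp_homeomorph e he)

theorem exchangeEnergy_le_liminf [LocallyCompactSpace Y] [L.NeBot]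
    (hK : ContinuousOn K {q | q.1 ≠ q.2}) (hK₀ : ∀ q, 0 ≤ K q) (hω : Continuous ω)
    (hω₀ : ∀ y, 0 ≤ ω y) (hGs : ∀ n, Integrable (Gs n) (Measure.pi fun _ => μ))
    (hGs₀ : ∀ n V, 0 ≤ Gs n V) (hG_meas : Measurable G)
    (hG : Integrable G (Measure.pi fun _ => μ)) (hG₀ : ∀ V, 0 ≤ G V)
    (h_lim : TendstoWeakly (Measure.pi fun _ => μ) L Gs G) :
    exchangeEnergy μ K ω i G ≤ liminf (fun n => exchangeEnergy μ K ω i (Gs n)) L := by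
  obtain ⟨Ks, hKs, hKs_supp, hKs_le, hKs_eq⟩ :=
    exists_seq_hasCompactSupport_le_of_continuousOn
      (isOpen_ne_fun continuous_fst continuous_snd) hK hK₀
  have integrand_eq (p : (ι → Y) × Y) : ∀ᶠ k in atTop,
      exchangeIntegrand (Ks k) ω i G p = exchangeIntegrand K ω i G p := by
    by_cases hp : p.1 i = p.2
    · simp [exchangeIntegrand, ← hp]
    · filter_upwards [hKs_eq (p.1 i, p.2) hp] with k hk
      rw [exchangeIntegrand, hk, exchangeIntegrand]
  have integrand_tendsto (p : (ι → Y) × Y) :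
      Tendsto (fun k => ENNReal.ofReal (exchangeIntegrand (Ks k) ω i G p)) atTop
        (𝓝 (ENNReal.ofReal (exchangeIntegrand K ω i G p))) :=
    ENNReal.tendsto_ofReal (tendsto_nhds_of_eventually_eq (integrand_eq p))
  calc exchangeEnergy μ K ω i G
      = ∫⁻ p, liminf (fun k => ENNReal.ofReal (exchangeIntegrand (Ks k) ω i G p)) atTop
          ∂(Measure.pi fun _ => μ).prod μ :=
        lintegral_congr fun p => (integrand_tendsto p).liminf_eq.symm
    _ ≤ liminf (fun k => exchangeEnergy μ (Ks k) ω i G) atTop :=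
        lintegral_liminf_le fun k =>
          (measurable_exchangeIntegrand (hKs k).measurable hω.measurable hG_meas).ennreal_ofReal
    _ ≤ liminf (fun _ : ℕ => liminf (fun n => exchangeEnergy μ K ω i (Gs n)) L) atTop :=
        liminf_le_liminf <| .of_forall fun k =>
          (exchangeEnergy_le_liminf_of_hasCompactSupport (hKs k) (hKs_supp k)
            (fun q => (hKs_le k q).1) hω hω₀ hGs hGs₀ hG hG₀ h_lim).trans <|
          liminf_le_liminf <| .of_forall fun _ => exchangeEnergy_mono fun q => (hKs_le k q).2
    _ = liminf (fun n => exchangeEnergy μ K ω i (Gs n)) L := liminf_const _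

end Semicontinuity

end ExchangeEnergy

theorem sum_liminf_le_liminf_sum {ι σ : Type*} [Fintype ι] {L : Filter σ} [L.IsCountablyGenerated]
    (u : ι → σ → ℝ≥0∞) : ∑ i, liminf (u i) L ≤ liminf (fun n => ∑ i, u i n) L := by
  let _ : MeasurableSpace ι := ⊤
  simpa [lintegral_count, tsum_fintype] using lintegral_liminf_le (μ := Measure.count) (u := L)
    (f := fun n i => u i n) fun _ => measurable_of_finite _

section FisherInformation

variable {d N : ℕ} {ν γ : ℝ} {G H : (Fin N → Euc d) → ℝ}

theorem IsProbDensity.integrable {α : Type*} [MeasureSpace α] {f : α → ℝ} (hf : IsProbDensity f) :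
    Integrable f := by
  refine ⟨hf.1.aestronglyMeasurable, ?_⟩
  rw [hasFiniteIntegral_iff_ofReal (.of_forall hf.2.1), hf.2.2]
  exact one_lt_top

theorem jap_pos (x : Euc d) : 0 < jap x := Real.sqrt_pos.2 (by positivity)

theorem jap_rpow_nonneg (γ : ℝ) (x : Euc d) : 0 ≤ jap x ^ γ := Real.rpow_nonneg (jap_pos x).le γ

theorem continuous_jap_rpow (γ : ℝ) : Continuous fun x : Euc d => jap x ^ γ := by
  refine Continuous.rpow_const ?_ fun x => .inl (jap_pos x).ne'
  unfold jap
  fun_prop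

theorem sqrt_jap_rpow_mul (x : Euc d) (γ a : ℝ) : √(jap x ^ γ * a) = jap x ^ (γ / 2) * √a := by
  rw [Real.sqrt_mul (jap_rpow_nonneg γ x), Real.sqrt_eq_rpow (jap x ^ γ),
    ← Real.rpow_mul (jap_pos x).le, mul_one_div]

/-- The kernel `|x - y|^{-(d+ν)}` of the fractional Sobolev seminorm of order `ν/2`. On the diagonal
its value is a junk one, which is harmless because there the increments it multiplies vanish. -/
def fracKernel (d : ℕ) (ν : ℝ) (q : Euc d × Euc d) : ℝ := (‖q.1 - q.2‖ ^ ((d : ℝ) + ν))⁻¹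

theorem fracKernel_nonneg (q : Euc d × Euc d) : 0 ≤ fracKernel d ν q := by
  unfold fracKernel
  positivity

theorem measurable_fracKernel : Measurable (fracKernel d ν) := by
  unfold fracKernel
  fun_prop

theorem continuousOn_fracKernel : ContinuousOn (fracKernel d ν) {q | q.1 ≠ q.2} := by
  have norm_ne {q : Euc d × Euc d} (hq : q.1 ≠ q.2) : ‖q.1 - q.2‖ ≠ 0 :=
    norm_sub_eq_zero_iff.not.2 hq
  refine ContinuousOn.inv₀ (ContinuousOn.rpow_const (by fun_prop) fun q hq => .inl (norm_ne hq))
    fun q hq => ?_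
  exact (Real.rpow_pos_of_pos ((norm_nonneg _).lt_of_ne' (norm_ne hq)) _).ne'

theorem fisherInfo_eq_sum_exchangeEnergy (hG : Measurable G) : fisherInfo d N ν γ G =
    (N : ℝ≥0∞)⁻¹ * ∑ i, exchangeEnergy volume (fracKernel d ν) (fun x => jap x ^ γ) i G := by
  unfold fisherInfo
  congr! with i
  rw [exchangeEnergy, lintegral_prod _ (measurable_exchangeIntegrand measurable_fracKernel
    (continuous_jap_rpow γ).measurable hG).ennreal_ofReal.aemeasurable]
  simp only [exchangeIntegrand, sqrt_jap_rpow_mul, fracKernel, div_eq_mul_inv, volume_pi]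

theorem fisherInfo_convexCombo_le (hG : IsProbDensity G) (hH : IsProbDensity H) {s t : ℝ}
    (hs : 0 ≤ s) (ht : 0 ≤ t) (hst : s + t = 1) :
    fisherInfo d N ν γ (fun V => s * G V + t * H V) ≤
      ENNReal.ofReal s * fisherInfo d N ν γ G + ENNReal.ofReal t * fisherInfo d N ν γ H := by
  have h_meas : Measurable fun V => s * G V + t * H V := (hG.1.const_mul s).add (hH.1.const_mul t)
  rw [fisherInfo_eq_sum_exchangeEnergy hG.1, fisherInfo_eq_sum_exchangeEnergy hH.1,
    fisherInfo_eq_sum_exchangeEnergy h_meas,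
    mul_left_comm (ENNReal.ofReal s), mul_left_comm (ENNReal.ofReal t), ← mul_add,
    Finset.mul_sum _ _ (ENNReal.ofReal s), Finset.mul_sum _ _ (ENNReal.ofReal t),
    ← Finset.sum_add_distrib]
  gcongr
  exact exchangeEnergy_convexCombo_le measurable_fracKernel fracKernel_nonneg
    (continuous_jap_rpow γ).measurable (jap_rpow_nonneg γ) hG.1 hG.2.1 hH.2.1 hs ht hst

theorem fisherInfo_le_liminf {σ : Type*} {L : Filter σ} [L.NeBot] [L.IsCountablyGenerated]
    {Gs : σ → (Fin N → Euc d) → ℝ} (hGs : ∀ n, IsProbDensity (Gs n)) (hG : IsProbDensity G)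
    (h_lim : TendstoWeakly volume L Gs G) :
    fisherInfo d N ν γ G ≤ liminf (fun n => fisherInfo d N ν γ (Gs n)) L := by
  rcases N.eq_zero_or_pos with rfl | hN
  · simp [fisherInfo]
  have hN_inv : (N : ℝ≥0∞)⁻¹ ≠ ∞ := inv_ne_top.2 (Nat.cast_ne_zero.2 hN.ne')
  simp only [fisherInfo_eq_sum_exchangeEnergy hG.1, fisherInfo_eq_sum_exchangeEnergy (hGs _).1,
    liminf_const_mul_of_ne_top hN_inv]
  gcongr
  refine le_trans (Finset.sum_le_sum fun i _ => ?_) (sum_liminf_le_liminf_sum _)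
  exact exchangeEnergy_le_liminf continuousOn_fracKernel fracKernel_nonneg (continuous_jap_rpow γ)
    (jap_rpow_nonneg γ) (fun n => (hGs n).integrable) (fun n => (hGs n).2.1) hG.1 hG.integrable
    hG.2.1 h_lim

theorem fisherInfo_prod (hN : 1 ≤ N) {f : Euc d → ℝ} (hf : IsProbDensity f) :
    fisherInfo d N ν γ (fun V => ∏ i, f (V i)) =
      fracSobolevSq d (ν / 2) (fun v => jap v ^ (γ / 2) * √(f v)) := by
  have hf_meas := hf.1
  have energy_eq (i : Fin N) :
      exchangeEnergy volume (fracKernel d ν) (fun x => jap x ^ γ) i (fun V => ∏ j, f (V j)) =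
        fracSobolevSq d (ν / 2) (fun v => jap v ^ (γ / 2) * √(f v)) := by
    rw [exchangeEnergy_prod measurable_fracKernel (continuous_jap_rpow γ).measurable hf.1 hf.2.1
      hf.2.2]
    simp only [fracSobolevSq, mul_div_cancel₀ ν (two_ne_zero' ℝ), sqrt_jap_rpow_mul, fracKernel,
      div_eq_mul_inv (_ ^ 2)]
  rw [fisherInfo_eq_sum_exchangeEnergy (by fun_prop)]
  simp only [energy_eq, Finset.sum_const, Finset.card_univ, Fintype.card_fin, nsmul_eq_mul]
  rw [← mul_assoc, ENNReal.inv_mul_cancel (Nat.cast_ne_zero.2 (by lia)) (natCast_ne_top N), one_mul]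

end FisherInformation

theorem stmt_11_general (d : ℕ) (ν γ : ℝ) (N : ℕ) (hN : 1 ≤ N) :
    (∀ G H : (Fin N → Euc d) → ℝ, IsProbDensity G → IsProbDensity H → ∀ t ∈ Icc (0 : ℝ) 1,
      fisherInfo d N ν γ (fun V => t * G V + (1 - t) * H V) ≤
        ENNReal.ofReal t * fisherInfo d N ν γ G + ENNReal.ofReal (1 - t) * fisherInfo d N ν γ H)
    ∧ (∀ (Gs : ℕ → (Fin N → Euc d) → ℝ) (G : (Fin N → Euc d) → ℝ),
        (∀ n, IsProbDensity (Gs n)) → IsProbDensity G → TendstoWeakly volume atTop Gs G →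
        fisherInfo d N ν γ G ≤ liminf (fun n => fisherInfo d N ν γ (Gs n)) atTop)
    ∧ (∀ f : Euc d → ℝ, IsProbDensity f →
        fisherInfo d N ν γ (fun V => ∏ i, f (V i)) =
          fracSobolevSq d (ν / 2) (fun v => jap v ^ (γ / 2) * √(f v))) :=
  ⟨fun _ _ hG hH _ ht => fisherInfo_convexCombo_le hG hH ht.1 (sub_nonneg.2 ht.2) (by ring),
    fun _ _ hGs hG h_lim => fisherInfo_le_liminf hGs hG h_lim, fun _ hf => fisherInfo_prod hN hf⟩

/-- the weighted fractional Fisher information `I^N_{ν,γ}` is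
(a) convex, (b) lower semicontinuous w.r.t. weak convergence of probability densities,
and (c) tensorizes: `I^N_{ν,γ}(f^{⊗N}) = |⟨·⟩^{γ/2}√f|²_{H^{ν/2}(ℝ^d)}`. -/
theorem stmt_11 (d : ℕ) (hd : 1 ≤ d) (ν γ : ℝ)
    (hν : ν ∈ Set.Ioo (0 : ℝ) 2) (hγ : γ ≤ 0) (N : ℕ) (hN : 1 ≤ N) :
    -- (a) convexity
    (∀ G H : (Fin N → Euc d) → ℝ, IsProbDensity G → IsProbDensity H →
      ∀ t : ℝ, t ∈ Set.Icc (0 : ℝ) 1 →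
        fisherInfo d N ν γ (fun V => t * G V + (1-t) * H V)
          ≤ ENNReal.ofReal t * fisherInfo d N ν γ G
            + ENNReal.ofReal (1-t) * fisherInfo d N ν γ H)
    -- (b) lower semicontinuity along weak convergence
    ∧ (∀ (Gs : ℕ → (Fin N → Euc d) → ℝ) (G : (Fin N → Euc d) → ℝ),
        (∀ n, IsProbDensity (Gs n)) → IsProbDensity G →
        (∀ φ : BoundedContinuousFunction (Fin N → Euc d) ℝ,
          Filter.Tendsto (fun n => ∫ V, φ V * Gs n V) Filter.atTop
            (nhds (∫ V, φ V * G V))) →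
        fisherInfo d N ν γ G ≤ Filter.liminf (fun n => fisherInfo d N ν γ (Gs n)) Filter.atTop)
    -- (c) tensorization
    ∧ (∀ f : Euc d → ℝ, IsProbDensity f →
        fisherInfo d N ν γ (fun V => ∏ i, f (V i))
          = fracSobolevSq d (ν/2) (fun v => jap v ^ (γ/2) * Real.sqrt (f v))) :=
  stmt_11_general d ν γ N hN

end
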